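/- arXiv:1412.5090 — 2 statements merged into one kernel-verified Lean document; each statement's English description precedes it below -/
import Mathlib

section
/- Let M = (W,R,V,N) be a mid-threshold epistemic neighborhood model. Then there exists a finitely additive probability measure P : 𝒫(W) → [0,1] with full support (P({w}) > 0 for every w ∈ W) such that for every w ∈ W and every X ⊆ [w]: X ∈ N(w) if and only if P_w(X) := P(X ∩ [w]) / P([w]) > 1/2. That is, every mid-threshold epistemic neighborhood model has an agreeing probability measure for threshold 1/2. -/
open Classical

/-- An epistemic neighborhood model. -/
structure ENM (W A : Type) where
  finite : Finite W
  nonempty : Nonempty W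
  R : W → W → Prop
  equiv : Equivalence R
  V : W → Set A
  N : W → Set (Set W)
  kbc : ∀ w : W, ∀ X ∈ N w, X ⊆ {v | R w v}
  kbf : ∀ w : W, ∅ ∉ N w
  contains_class : ∀ w : W, {v | R w v} ∈ N w
  agreeN : ∀ w v : W, R w v → N v = N w
  kbm : ∀ w : W, ∀ X ∈ N w, ∀ Y : Set W, X ⊆ Y → Y ⊆ {v | R w v} → Y ∈ N w

/-- The equivalence class `[w]` of a world. -/
def ENM.cl {W A : Type} (M : ENM W A) (w : W) : Set W := {v | M.R w v}

/-- A mid-threshold epistemic neighborhood model: an epistemic neighborhood model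
additionally satisfying (d), (sc) and (scott). -/
structure MidENM (W A : Type) extends ENM W A where
  d : ∀ w : W, ∀ X ∈ N w, {v | R w v} \ X ∉ N w
  sc : ∀ w : W, ∀ X Y : Set W, X ⊆ {v | R w v} → Y ⊆ {v | R w v} →
      {v | R w v} \ X ∉ N w → X ⊂ Y → Y ∈ N w
  scott : ∀ w : W, ∀ m : ℕ, ∀ X Y : Fin (m + 1) → Set W,
      (∀ i, X i ⊆ {v | R w v}) → (∀ i, Y i ⊆ {v | R w v}) →
      (∀ v : W, (Finset.univ.filter (fun i => v ∈ X i)).card ≤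
                (Finset.univ.filter (fun i => v ∈ Y i)).card) →
      X 0 ∈ N w →
      (∀ i : Fin (m + 1), i ≠ 0 → {v | R w v} \ X i ∉ N w) →
      ∃ j : Fin (m + 1), Y j ∈ N w

/-- Farkas' lemma over the rationals, following Bartl's induction. -/
theorem farkas_aux {V ι : Type} [AddCommGroup V] [Module ℚ V] (s : Finset ι) :
    ∀ (a : ι → V →ₗ[ℚ] ℚ) (b : V →ₗ[ℚ] ℚ),
      (∀ x, (∀ i ∈ s, 0 ≤ a i x) → 0 ≤ b x) →
      ∃ l : ι → ℚ, (∀ i, 0 ≤ l i) ∧ b = ∑ i ∈ s, l i • a i := by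
  induction s using Finset.induction_on with
  | empty =>
    intro a b h
    refine ⟨fun _ => 0, fun _ => le_rfl, ?_⟩
    ext x
    have h1 := h x (by simp)
    have h2 := h (-x) (by simp)
    simp only [map_neg] at h2
    simp
    linarith
  | insert n s hn ih =>
    intro a b h
    by_cases hb : ∀ x, (∀ i ∈ s, 0 ≤ a i x) → 0 ≤ b x
    · obtain ⟨l, hl, e⟩ := ih a b hb
      refine ⟨fun i => if i = n then 0 else l i, fun i => by dsimp only; split_ifs <;> simp [hl], ?_⟩
      rw [Finset.sum_insert hn, e]
      simp only [if_true, zero_smul, zero_add]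
      refine Finset.sum_congr rfl fun i hi => ?_
      have : i ≠ n := fun h => hn (h ▸ hi)
      simp [this]
    · push Not at hb
      obtain ⟨x1, hx1, hbx1⟩ := hb
      have hneg : a n x1 < 0 := by
        by_contra hc
        push Not at hc
        have := h x1 (by
          intro i hi
          rcases Finset.mem_insert.1 hi with rfl | hi
          · exact hc
          · exact hx1 i hi)
        linarith
      obtain ⟨x0, hx0, hbx0, hn0⟩ : ∃ x0, (∀ i ∈ s, 0 ≤ a i x0) ∧ b x0 < 0 ∧ a n x0 = -1 := by
        have hp : 0 < (-(a n x1))⁻¹ := inv_pos.2 (by linarith)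
        refine ⟨(-(a n x1))⁻¹ • x1, fun i hi => ?_, ?_, ?_⟩
        · rw [map_smul, smul_eq_mul]
          exact mul_nonneg hp.le (hx1 i hi)
        · rw [map_smul, smul_eq_mul]
          exact mul_neg_of_pos_of_neg hp hbx1
        · rw [map_smul, smul_eq_mul]
          rw [inv_neg, neg_mul, inv_mul_cancel₀ hneg.ne]
      obtain ⟨l, hl, e⟩ := ih (fun i => a i + (a i x0) • a n) (b + (b x0) • a n) (by
        intro x hx
        have := h (x + (a n x) • x0) (by
          intro i hi
          rcases Finset.mem_insert.1 hi with rfl | hi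
          · simp [hn0]
          · have := hx i hi
            simp only [LinearMap.add_apply, LinearMap.smul_apply, smul_eq_mul] at this
            simp only [map_add, map_smul, smul_eq_mul]
            linarith)
        simp only [map_add, map_smul, smul_eq_mul] at this
        simp only [LinearMap.add_apply, LinearMap.smul_apply, smul_eq_mul]
        linarith)
      have hc : 0 ≤ ∑ i ∈ s, l i * a i x0 - b x0 := by
        have := Finset.sum_nonneg (fun i hi => mul_nonneg (hl i) (hx0 i hi))
        linarith
      refine ⟨fun i => if i = n then ∑ i ∈ s, l i * a i x0 - b x0 else l i,
        fun i => by dsimp only; split_ifs <;> simp [hl, hc], ?_⟩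
      rw [Finset.sum_insert hn]
      have e2 : ∑ i ∈ s, (if i = n then ∑ i ∈ s, l i * a i x0 - b x0 else l i) • a i
          = ∑ i ∈ s, l i • a i := by
        refine Finset.sum_congr rfl fun i hi => ?_
        have : i ≠ n := fun h => hn (h ▸ hi)
        simp [this]
      rw [e2]
      ext x
      have := congrArg (fun f => f x) e
      simp only [LinearMap.add_apply, LinearMap.smul_apply, smul_eq_mul, LinearMap.sum_apply,
        mul_add, Finset.sum_add_distrib] at this
      simp only [if_true, LinearMap.add_apply, LinearMap.smul_apply, smul_eq_mul,
        LinearMap.sum_apply, sub_mul, Finset.sum_mul]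
      simp only [mul_assoc] at this ⊢
      linarith

/-- The signed indicator of `X` within the class `C`. -/
noncomputable def sgn {W : Type} (C X : Set W) (v : W) : ℚ :=
  if v ∈ C then (if v ∈ X then 1 else -1) else 0

theorem scott_fintype {W A : Type} (M : MidENM W A) (w : W) {ι : Type} [Fintype ι] (i0 : ι)
    (X : ι → Set W) (hX : ∀ i, X i ⊆ {v | M.R w v})
    (hw : ∀ i, {v | M.R w v} \ X i ∉ M.N w) (h0 : X i0 ∈ M.N w)
    (hs : ∀ v, ∑ i, sgn {v | M.R w v} (X i) v ≤ 0) : False := by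
  obtain ⟨m, hm⟩ : ∃ m, Fintype.card ι = m + 1 :=
    Nat.exists_eq_succ_of_ne_zero (Fintype.card_pos_iff.2 ⟨i0⟩).ne'
  let e0 : Fin (m + 1) ≃ ι := (Fintype.equivFinOfCardEq hm).symm
  let e : Fin (m + 1) ≃ ι := (Equiv.swap 0 (e0.symm i0)).trans e0
  have he : e 0 = i0 := by simp [e]
  obtain ⟨j, hj⟩ := M.scott w m (fun k => X (e k)) (fun k => {v | M.R w v} \ X (e k))
    (fun k => hX _) (fun k => Set.sdiff_subset) (by
      intro v
      by_cases hv : M.R w v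
      · have h := hs v
        rw [← e.sum_comp] at h
        have e1 : ∀ k, sgn {v | M.R w v} (X (e k)) v
            = (if v ∈ X (e k) then (1 : ℚ) else 0)
              - (if v ∈ {v | M.R w v} \ X (e k) then (1 : ℚ) else 0) := by
          intro k
          by_cases hk : v ∈ X (e k) <;> simp [sgn, hv, hk]
        simp only [e1, Finset.sum_sub_distrib, Finset.sum_boole] at h
        have h' := sub_nonpos.1 h
        have h'' := Nat.cast_le.1 h'
        convert h''
      · have : ∀ k, v ∉ X (e k) := fun k hk => hv (hX _ hk)
        simp [this])
    (by simpa [he] using h0) (fun k _ => hw _)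
  exact hw _ hj

theorem scott_nat {W A : Type} [Fintype W] (M : MidENM W A) (w : W) (n : Set W → ℕ) (Z : Set W)
    (hZ : Z ∈ M.N w) (hn : 0 < n Z)
    (hX : ∀ X, 0 < n X → X ⊆ {v | M.R w v} ∧ {v | M.R w v} \ X ∉ M.N w)
    (hs : ∀ v, ∑ X, (n X : ℚ) * sgn {v | M.R w v} X v ≤ 0) : False := by
  refine scott_fintype M w (ι := Σ X : Set W, Fin (n X)) ⟨Z, ⟨0, hn⟩⟩ (fun i => i.1)
    (fun i => (hX i.1 i.2.pos).1) (fun i => (hX i.1 i.2.pos).2) hZ ?_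
  intro v
  rw [Fintype.sum_sigma]
  simpa using hs v

theorem scott_rat {W A : Type} [Fintype W] (M : MidENM W A) (w : W) (l : Set W → ℚ) (Z : Set W)
    (hZ : Z ∈ M.N w) (hl : ∀ X, 0 ≤ l X) (hn : 0 < l Z)
    (hX : ∀ X, 0 < l X → X ⊆ {v | M.R w v} ∧ {v | M.R w v} \ X ∉ M.N w)
    (hs : ∀ v, ∑ X, l X * sgn {v | M.R w v} X v ≤ 0) : False := by
  let D : ℕ := ∏ X, (l X).den
  have hD : (0 : ℚ) < D := by
    have : 0 < D := Finset.prod_pos fun X _ => (l X).den_pos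
    exact_mod_cast this
  have key : ∀ X, ∃ k : ℕ, (k : ℚ) = D * l X := by
    intro X
    obtain ⟨c, hc⟩ : (l X).den ∣ D := Finset.dvd_prod_of_mem _ (Finset.mem_univ X)
    refine ⟨c * (l X).num.toNat, ?_⟩
    have h1 : (((l X).num.toNat : ℤ) : ℚ) = (l X).num := by
      rw [Int.toNat_of_nonneg (Rat.num_nonneg.2 (hl X))]
    have h2 := Rat.mul_den_eq_num (l X)
    rw [hc]
    push_cast at h1 ⊢
    rw [h1, ← h2]
    ring
  choose n hn' using key
  have pos : ∀ X, 0 < n X ↔ 0 < l X := by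
    intro X
    have : (0 : ℚ) < n X ↔ 0 < l X := by
      rw [hn' X]
      exact mul_pos_iff_of_pos_left hD
    rw [← this]
    exact Nat.cast_pos.symm
  refine scott_nat M w n Z hZ ((pos Z).2 hn) (fun X h => hX X ((pos X).1 h)) fun v => ?_
  simp only [hn', mul_assoc, ← Finset.mul_sum]
  exact mul_nonpos_of_nonneg_of_nonpos hD.le (hs v)

/-- The linear functional with coefficient vector `c`. -/
noncomputable def dotL {W : Type} [Fintype W] (c : W → ℚ) : (W → ℚ) →ₗ[ℚ] ℚ :=
  ∑ v, c v • LinearMap.proj v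

theorem dotL_apply {W : Type} [Fintype W] (c p : W → ℚ) : dotL c p = ∑ v, c v * p v := by
  simp [dotL]

theorem dotL_single {W : Type} [Fintype W] (c : W → ℚ) (v : W) :
    dotL c (Pi.single v 1) = c v := by
  simp [dotL_apply, Pi.single_apply]

/-- Coordinate form of the alternative. -/
theorem alt_aux {W : Type} [Fintype W] (S : Set W → Prop) (a : Set W → W → ℚ) (b : W → ℚ)
    (h : ¬ ∃ p : W → ℚ, (∀ v, 0 ≤ p v) ∧ (∀ X, S X → 0 ≤ ∑ v, a X v * p v) ∧
      0 < ∑ v, b v * p v) :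
    ∃ l : Set W → ℚ, (∀ X, 0 ≤ l X) ∧ (∀ X, 0 < l X → S X) ∧
      ∀ v, b v + ∑ X, l X * a X v ≤ 0 := by
  let a' : {X : Set W // S X} ⊕ W → (W → ℚ) →ₗ[ℚ] ℚ :=
    Sum.elim (fun X => dotL (a X.1)) (fun u => dotL (Pi.single u 1))
  obtain ⟨l, hl, e⟩ := farkas_aux Finset.univ a' (-dotL b) (by
    intro p hp
    by_contra hc
    apply h
    refine ⟨p, fun v => ?_, fun X hX => ?_, ?_⟩
    · have := hp (Sum.inr v) (by simp)
      simpa [a', dotL_apply, Pi.single_apply] using this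
    · have := hp (Sum.inl ⟨X, hX⟩) (by simp)
      simpa [a', dotL_apply] using this
    · rw [← dotL_apply]
      simp only [LinearMap.neg_apply] at hc
      linarith)
  refine ⟨fun X => if h : S X then l (Sum.inl ⟨X, h⟩) else 0,
    fun X => by dsimp only; split_ifs <;> simp [hl], fun X hX => ?_, fun v => ?_⟩
  · by_contra hc
    simp [hc] at hX
  · have := congrArg (fun f => f (Pi.single v 1)) e
    simp only [LinearMap.neg_apply, Fintype.sum_sum_type, a', Sum.elim_inl, Sum.elim_inr] at this
    simp only [LinearMap.add_apply, LinearMap.sum_apply, LinearMap.smul_apply, smul_eq_mul,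
      dotL_single] at this
    have h2 : ∑ X, (if h : S X then l (Sum.inl ⟨X, h⟩) else 0) * a X v
        = ∑ X : {X // S X}, l (Sum.inl X) * a X.1 v := by
      symm
      refine Finset.sum_of_injOn (fun X => X.1) (fun X _ Y _ h => Subtype.ext h) (by simp) ?_ ?_
      · intro X _ hX
        have : ¬ S X := fun h => hX ⟨⟨X, h⟩, by simp, rfl⟩
        simp [this]
      · intro X _
        simp [X.2]
    have h3 : 0 ≤ ∑ u, l (Sum.inr u) * (Pi.single u 1 : W → ℚ) v :=
      Finset.sum_nonneg fun u _ => mul_nonneg (hl _) (by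
        rw [Pi.single_apply]; split_ifs <;> simp)
    rw [h2]
    linarith

theorem exists_strict {W A : Type} [Fintype W] (M : MidENM W A) (w : W) (Z : Set W)
    (hZ : Z ∈ M.N w) : ∃ p : W → ℚ, (∀ v, 0 ≤ p v) ∧
      (∀ X, (X ⊆ {v | M.R w v} ∧ {v | M.R w v} \ X ∉ M.N w) →
        0 ≤ ∑ v, sgn {v | M.R w v} X v * p v) ∧
      0 < ∑ v, sgn {v | M.R w v} Z v * p v := by
  by_contra h
  obtain ⟨l, hl, hS, e⟩ := alt_aux _ _ _ h
  refine scott_rat M w (fun X => l X + if X = Z then 1 else 0) Z hZ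
    (fun X => add_nonneg (hl X) (by split_ifs <;> simp)) (by have := hl Z; simp; linarith) ?_ ?_
  · intro X hX
    by_cases hXZ : X = Z
    · subst hXZ
      exact ⟨M.kbc w X hZ, M.d w X hZ⟩
    · exact hS X (by simpa [hXZ] using hX)
  · intro v
    have := e v
    simp only [add_mul, Finset.sum_add_distrib, ite_mul, one_mul, zero_mul,
      Finset.sum_ite_eq', Finset.mem_univ, if_true]
    linarith

theorem exists_pos_at {W A : Type} [Fintype W] (M : MidENM W A) (w u : W) (hu : M.R w u) :
    ∃ p : W → ℚ, (∀ v, 0 ≤ p v) ∧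
      (∀ X, (X ⊆ {v | M.R w v} ∧ {v | M.R w v} \ X ∉ M.N w) →
        0 ≤ ∑ v, sgn {v | M.R w v} X v * p v) ∧ 0 < p u := by
  by_contra h
  obtain ⟨l, hl, hS, e⟩ := alt_aux (fun X => X ⊆ {v | M.R w v} ∧ {v | M.R w v} \ X ∉ M.N w)
    (sgn {v | M.R w v}) (fun v => if v = u then 1 else 0) (by simpa using h)
  obtain ⟨X1, hX1, hu1⟩ : ∃ X, 0 < l X ∧ u ∉ X := by
    by_contra hc
    push Not at hc
    have h1 := e u
    have : 0 ≤ ∑ X, l X * sgn {v | M.R w v} X u := by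
      refine Finset.sum_nonneg fun X _ => ?_
      rcases (hl X).lt_or_eq with h | h
      · have := hc X h
        simp [sgn, hu, this, hl]
      · simp [← h]
    simp at h1
    linarith
  obtain ⟨hs1, hw1⟩ := hS X1 hX1
  have hZs : insert u X1 ⊆ {v | M.R w v} := Set.insert_subset hu hs1
  have hZ : insert u X1 ∈ M.N w := M.sc w X1 _ hs1 hZs hw1 (Set.ssubset_insert hu1)
  set t : ℚ := max 2 (l X1)⁻¹ with ht
  have ht2 : 2 ≤ t := le_max_left _ _
  have ht1 : 1 ≤ t * l X1 := by
    have : (l X1)⁻¹ ≤ t := le_max_right _ _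
    calc (1 : ℚ) = (l X1)⁻¹ * l X1 := (inv_mul_cancel₀ hX1.ne').symm
      _ ≤ _ := mul_le_mul_of_nonneg_right this hX1.le
  have hnn : ∀ X, 0 ≤ t * l X - (if X = X1 then 1 else 0) := by
    intro X
    split_ifs with h
    · subst h
      linarith
    · have := mul_nonneg (by linarith : 0 ≤ t) (hl X)
      linarith
  refine scott_rat M w (fun X => t * l X - (if X = X1 then 1 else 0)
      + if X = insert u X1 then 1 else 0) _ hZ
    (fun X => add_nonneg (hnn X) (by split_ifs <;> simp))
    (by have := hnn (insert u X1); simp only [if_true]; linarith) ?_ ?_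
  · intro X hX
    by_cases hXZ : X = insert u X1
    · subst hXZ
      exact ⟨hZs, M.d w _ hZ⟩
    · apply hS X
      rcases (hl X).lt_or_eq with h | h
      · exact h
      · simp only [hXZ, ← h, if_false] at hX
        split_ifs at hX <;> norm_num at hX
  · intro v
    have h1 := e v
    simp only [add_mul, sub_mul, mul_assoc, Finset.sum_add_distrib, Finset.sum_sub_distrib,
      ite_mul, one_mul, zero_mul, Finset.sum_ite_eq', Finset.mem_univ, if_true, ← Finset.mul_sum]
    have h2 : t * ∑ X, l X * sgn {v | M.R w v} X v ≤ t * (- (if v = u then 1 else 0)) :=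
      mul_le_mul_of_nonneg_left (by linarith) (by linarith)
    generalize t * ∑ X, l X * sgn {v | M.R w v} X v = q at h2 ⊢
    by_cases hv : v = u
    · subst hv
      simp [sgn, hu, hu1] at h2 ⊢
      linarith
    · simp [sgn, hv] at h2 ⊢
      linarith

theorem class_weights {W A : Type} [Fintype W] (M : MidENM W A) (w : W) :
    ∃ p : W → ℚ, (∀ v, M.R w v → 0 < p v) ∧
      ∀ X, X ⊆ {v | M.R w v} → (X ∈ M.N w ↔ 0 < ∑ v, sgn {v | M.R w v} X v * p v) := by
  choose f hf0 hf1 hf2 using fun Z : {Z // Z ∈ M.N w} => exists_strict M w Z.1 Z.2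
  choose g hg0 hg1 hg2 using fun u : {u // M.R w u} => exists_pos_at M w u.1 u.2
  let p : W → ℚ := fun v => ∑ Z, f Z v + ∑ u, g u v
  have hp : ∀ c : W → ℚ, ∑ v, c v * p v
      = ∑ Z, ∑ v, c v * f Z v + ∑ u, ∑ v, c v * g u v := by
    intro c
    simp only [p, mul_add, Finset.sum_add_distrib, Finset.mul_sum]
    rw [Finset.sum_comm, Finset.sum_comm (s := Finset.univ) (t := Finset.univ)
      (f := fun v u => c v * g u v)]
  have hweak : ∀ X, (X ⊆ {v | M.R w v} ∧ {v | M.R w v} \ X ∉ M.N w) →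
        0 ≤ ∑ v, sgn {v | M.R w v} X v * p v := by
    intro X hX
    rw [hp]
    exact add_nonneg (Finset.sum_nonneg fun Z _ => hf1 Z X hX)
      (Finset.sum_nonneg fun u _ => hg1 u X hX)
  have hstrict : ∀ X ∈ M.N w, 0 < ∑ v, sgn {v | M.R w v} X v * p v := by
    intro X hX
    have hX' := And.intro (M.kbc w X hX) (M.d w X hX)
    rw [hp]
    refine add_pos_of_pos_of_nonneg ?_ (Finset.sum_nonneg fun u _ => hg1 u X hX')
    exact Finset.sum_pos' (fun Z _ => hf1 Z X hX') ⟨⟨X, hX⟩, Finset.mem_univ _, hf2 ⟨X, hX⟩⟩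
  refine ⟨p, fun v hv => ?_, fun X hX => ⟨hstrict X, fun h => ?_⟩⟩
  · refine add_pos_of_nonneg_of_pos (Finset.sum_nonneg fun Z _ => hf0 Z v) ?_
    exact Finset.sum_pos' (fun u _ => hg0 u v) ⟨⟨v, hv⟩, Finset.mem_univ _, hg2 ⟨v, hv⟩⟩
  · by_contra hc
    have := hweak ({v | M.R w v} \ X) ⟨Set.sdiff_subset, by
      rwa [Set.sdiff_sdiff_cancel_left hX]⟩
    have e : ∑ v, sgn {v | M.R w v} ({v | M.R w v} \ X) v * p v
        = - ∑ v, sgn {v | M.R w v} X v * p v := by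
      rw [← Finset.sum_neg_distrib]
      refine Finset.sum_congr rfl fun v _ => ?_
      by_cases h1 : M.R w v <;> by_cases h2 : v ∈ X <;> simp [sgn, h1, h2]
    linarith

/-- Lenzen's theorem: every mid-threshold epistemic neighborhood model has an agreeing
probability measure for threshold `1/2`. -/
theorem lenzen_agreeing_measure {W A : Type} (M : MidENM W A) :
    ∃ P : Set W → ℝ,
      (∀ X : Set W, 0 ≤ P X) ∧ (∀ X : Set W, P X ≤ 1) ∧ P Set.univ = 1 ∧
      (∀ X Y : Set W, X ∩ Y = ∅ → P (X ∪ Y) = P X + P Y) ∧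
      (∀ w : W, 0 < P {w}) ∧
      (∀ (w : W) (X : Set W), X ⊆ M.toENM.cl w →
        (X ∈ M.N w ↔ 1/2 < P (X ∩ M.toENM.cl w) / P (M.toENM.cl w))) := by
  have := M.finite
  have := M.nonempty
  have := Fintype.ofFinite W
  choose f hf1 hf2 using class_weights M
  let st : Setoid W := ⟨M.R, M.equiv⟩
  let r : W → W := fun v => (Quotient.mk st v).out
  have hr : ∀ v, M.R (r v) v := fun v => Quotient.mk_out (s := st) v
  have hrr : ∀ v w, M.R w v → r v = r w := fun v w h => by
    have : Quotient.mk st w = Quotient.mk st v := Quotient.sound h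
    simp only [r, this]
  let p : W → ℝ := fun v => (f (r v) v : ℚ)
  have hp : ∀ v, 0 < p v := fun v => by
    have := hf1 (r v) v (hr v)
    exact Rat.cast_pos.2 this
  let S : Set W → ℝ := fun X => ∑ v, if v ∈ X then p v else 0
  have hS0 : ∀ X, 0 ≤ S X := fun X => Finset.sum_nonneg fun v _ => by
    split_ifs
    · exact (hp v).le
    · exact le_rfl
  have hSpos : ∀ X : Set W, X.Nonempty → 0 < S X := by
    rintro X ⟨x, hx⟩
    refine Finset.sum_pos' (fun v _ => ?_) ⟨x, Finset.mem_univ _, ?_⟩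
    · split_ifs
      · exact (hp v).le
      · exact le_rfl
    · simpa [hx] using hp x
  have hSadd : ∀ X Y : Set W, X ∩ Y = ∅ → S (X ∪ Y) = S X + S Y := by
    intro X Y h
    simp only [S, ← Finset.sum_add_distrib]
    refine Finset.sum_congr rfl fun v _ => ?_
    have : ¬ (v ∈ X ∧ v ∈ Y) := fun hv => by
      have h' : v ∈ X ∩ Y := hv
      simp [h] at h'
    by_cases h1 : v ∈ X <;> by_cases h2 : v ∈ Y <;> simp_all
  have hT : 0 < S Set.univ := hSpos _ Set.univ_nonempty
  refine ⟨fun X => S X / S Set.univ, fun X => div_nonneg (hS0 X) hT.le, fun X => ?_,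
    div_self hT.ne', fun X Y h => ?_, fun w => div_pos (hSpos _ (Set.singleton_nonempty w)) hT,
    fun w X hX => ?_⟩
  · rw [div_le_one hT]
    refine Finset.sum_le_sum fun v _ => ?_
    have := (hp v).le
    split_ifs <;> simp_all
  · simp only [hSadd X Y h, add_div]
  · have hN : M.N w = M.N (r w) := M.agreeN _ _ (hr w)
    have hC : M.toENM.cl w = {v | M.R (r w) v} := by
      ext v
      exact ⟨fun h => M.equiv.trans (hr w) h, fun h => M.equiv.trans (M.equiv.symm (hr w)) h⟩
    have hCpos : 0 < S (M.toENM.cl w) := hSpos _ ⟨w, M.equiv.refl w⟩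
    dsimp only
    rw [div_div_div_cancel_right₀ hT.ne', lt_div_iff₀ hCpos, Set.inter_eq_left.2 hX, hN,
      hf2 (r w) X (hC ▸ hX)]
    have key : ((∑ v, sgn {v | M.R (r w) v} X v * f (r w) v : ℚ) : ℝ)
        = 2 * S X - S (M.toENM.cl w) := by
      simp only [S, Finset.mul_sum, ← Finset.sum_sub_distrib]
      push_cast
      refine Finset.sum_congr rfl fun v _ => ?_
      rw [hC]
      by_cases h1 : M.R (r w) v
      · have h3 : r v = r w := hrr v w (M.equiv.trans (M.equiv.symm (hr w)) h1)
        by_cases h2 : v ∈ X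
        · simp [sgn, h1, h2, p, h3]
          ring
        · simp [sgn, h1, h2, p, h3]
      · have h2 : v ∉ X := fun h => h1 (by have := hX h; rw [hC] at this; exact this)
        simp [sgn, h1, h2]
    rw [← Rat.cast_pos (K := ℝ), key]
    constructor <;> intro h <;> linarith
end

section
/- The calculus KB is incomplete for all thresholds with respect to epistemic probability models: there exists a formula φ of L_KB such that for every c ∈ (0,1) ∩ ℚ, φ is true at every world of every epistemic probability model under the probability semantics with threshold c, and yet KB ⊬ φ. -/
open Classical

/-- An epistemic probability model: finite nonempty world set, S5 (equivalence)
accessibility relation, valuation, and a finitely additive probability measure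
with full support. -/
structure EPM (W A : Type) where
  finite : Finite W
  nonempty : Nonempty W
  R : W → W → Prop
  equiv : Equivalence R
  V : W → Set A
  P : Set W → ℝ
  nonneg : ∀ X : Set W, 0 ≤ P X
  le_one : ∀ X : Set W, P X ≤ 1
  norm : P Set.univ = 1
  add : ∀ X Y : Set W, X ∩ Y = ∅ → P (X ∪ Y) = P X + P Y
  full : ∀ w : W, 0 < P {w}

/-- The equivalence class `[w]` of a world. -/
def EPM.cl {W A : Type} (M : EPM W A) (w : W) : Set W := {v | M.R w v}

/-- `P_w(X) := P(X ∩ [w]) / P([w])`. -/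
noncomputable def EPM.Pw {W A : Type} (M : EPM W A) (w : W) (X : Set W) : ℝ :=
  M.P (X ∩ M.cl w) / M.P (M.cl w)

/-- The language `L_KB`: `φ ::= ⊤ | p | ¬φ | φ∧φ | Kφ | Bφ`. -/
inductive Form (A : Type) : Type where
  | top : Form A
  | atom : A → Form A
  | neg : Form A → Form A
  | and : Form A → Form A → Form A
  | K : Form A → Form A
  | B : Form A → Form A

namespace Form

/-- Material implication abbreviation. -/
def imp {A : Type} (φ ψ : Form A) : Form A := Form.neg (Form.and φ (Form.neg ψ))

/-- Disjunction abbreviation. -/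
def or {A : Type} (φ ψ : Form A) : Form A := Form.neg (Form.and (Form.neg φ) (Form.neg ψ))

/-- Falsehood `⊥ := ¬⊤`. -/
def bot {A : Type} : Form A := Form.neg Form.top

/-- Biconditional abbreviation. -/
def iff {A : Type} (φ ψ : Form A) : Form A := Form.and (Form.imp φ ψ) (Form.imp ψ φ)

end Form

/-- Truth set of a formula in an epistemic probability model, for threshold `c`:
`Kφ` holds at `w` iff `P_w(⟦φ⟧) = 1`, and `Bφ` holds at `w` iff `P_w(⟦φ⟧) > c`. -/
noncomputable def psem {W A : Type} (c : ℝ) (M : EPM W A) : Form A → Set W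
  | Form.top => Set.univ
  | Form.atom p => {w | p ∈ M.V w}
  | Form.neg φ => (psem c M φ)ᶜ
  | Form.and φ ψ => psem c M φ ∩ psem c M ψ
  | Form.K φ => {w | M.Pw w (psem c M φ) = 1}
  | Form.B φ => {w | c < M.Pw w (psem c M φ)}

/-- Boolean evaluation of a formula under a valuation of "atomic" formulas
(propositional letters and formulas of the form `Kφ` or `Bφ`). -/
def evalb {A : Type} (v : Form A → Bool) : Form A → Bool
  | Form.top => true
  | Form.atom p => v (Form.atom p)
  | Form.neg φ => !(evalb v φ)
  | Form.and φ ψ => evalb v φ && evalb v ψ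
  | Form.K φ => v (Form.K φ)
  | Form.B φ => v (Form.B φ)

/-- `φ` is a propositional tautology (treating `Kψ` and `Bψ` as atoms). -/
def Taut {A : Type} (φ : Form A) : Prop := ∀ v : Form A → Bool, evalb v φ = true

/-- The Hilbert calculus `KB`. -/
inductive KB {A : Type} : Form A → Prop where
  | taut {φ : Form A} : Taut φ → KB φ
  | kdist (φ ψ : Form A) :
      KB (Form.imp (Form.K (Form.imp φ ψ)) (Form.imp (Form.K φ) (Form.K ψ)))
  | kt (φ : Form A) : KB (Form.imp (Form.K φ) φ)
  | k4 (φ : Form A) : KB (Form.imp (Form.K φ) (Form.K (Form.K φ)))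
  | k5 (φ : Form A) : KB (Form.imp (Form.neg (Form.K φ)) (Form.K (Form.neg (Form.K φ))))
  | bf : KB (Form.neg (Form.B (Form.bot)))
  | bn : KB (Form.B Form.top)
  | ap (φ : Form A) : KB (Form.imp (Form.B φ) (Form.K (Form.B φ)))
  | an (φ : Form A) : KB (Form.imp (Form.neg (Form.B φ)) (Form.K (Form.neg (Form.B φ))))
  | kbm (φ ψ : Form A) :
      KB (Form.imp (Form.K (Form.imp φ ψ)) (Form.imp (Form.B φ) (Form.B ψ)))
  | mp {φ ψ : Form A} : KB (Form.imp φ ψ) → KB φ → KB ψ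
  | nec {φ : Form A} : KB φ → KB (Form.K φ)

theorem EPM.P_cl_pos {W A : Type} (M : EPM W A) (w : W) : 0 < M.P (M.cl w) := by
  have h := M.add {w} (M.cl w \ {w}) (by simp)
  have hw : ({w} : Set W) ⊆ M.cl w := by
    rintro x rfl
    exact M.equiv.refl x
  rw [Set.union_diff_cancel hw] at h
  have h1 := M.full w
  have h2 := M.nonneg (M.cl w \ {w})
  linarith

theorem EPM.Pw_compl {W A : Type} (M : EPM W A) (w : W) (X : Set W) :
    M.Pw w X + M.Pw w Xᶜ = 1 := by
  have h := M.add (X ∩ M.cl w) (Xᶜ ∩ M.cl w) (by ext x; simp; tauto)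
  rw [← Set.union_inter_distrib_right, Set.union_compl_self, Set.univ_inter] at h
  have hp := M.P_cl_pos w
  unfold EPM.Pw
  rw [← add_div, ← h, div_self hp.ne']

/-- Neighbourhood semantics on four worlds: `B φ` holds iff `φ` contains one of the
two halves given by the first coordinate. -/
def nsem : Form ℕ → Bool × Bool → Prop
  | Form.top, _ => True
  | Form.atom n, w => if n = 0 then w.1 = true else w.2 = true
  | Form.neg φ, w => ¬ nsem φ w
  | Form.and φ ψ, w => nsem φ w ∧ nsem ψ w
  | Form.K φ, _ => ∀ v, nsem φ v
  | Form.B φ, _ => (∀ b, nsem φ (true, b)) ∨ (∀ b, nsem φ (false, b))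

theorem evalb_nsem (w : Bool × Bool) (φ : Form ℕ) :
    evalb (fun ψ => decide (nsem ψ w)) φ = true ↔ nsem φ w := by
  induction φ with
  | top => simp [evalb, nsem]
  | atom n => simp [evalb]
  | neg φ ih => simp only [evalb, nsem, ← ih]; simp
  | and φ ψ ih1 ih2 => simp only [evalb, nsem, ← ih1, ← ih2]; simp
  | K φ => simp [evalb]
  | B φ => simp [evalb]

theorem nsem_imp (φ ψ : Form ℕ) (w : Bool × Bool) :
    nsem (Form.imp φ ψ) w ↔ (nsem φ w → nsem ψ w) := by
  simp [Form.imp, nsem]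

theorem KB_nsem {φ : Form ℕ} (h : KB φ) : ∀ w, nsem φ w := by
  induction h with
  | taut h => exact fun w => (evalb_nsem w _).1 (h _)
  | kdist φ ψ =>
    intro w
    simp only [nsem_imp, nsem]
    exact fun h1 h2 v => h1 v (h2 v)
  | kt φ =>
    intro w
    simp only [nsem_imp, nsem]
    exact fun h => h w
  | k4 φ =>
    intro w
    simp only [nsem_imp, nsem]
    exact fun h _ => h
  | k5 φ =>
    intro w
    simp only [nsem_imp, nsem]
    exact fun h _ => h
  | bf => intro w; simp [nsem, Form.bot]
  | bn => intro w; simp [nsem]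
  | ap φ =>
    intro w
    simp only [nsem_imp, nsem]
    exact fun h _ => h
  | an φ =>
    intro w
    simp only [nsem_imp, nsem]
    exact fun h _ => h
  | kbm φ ψ =>
    intro w
    simp only [nsem_imp, nsem]
    exact fun h => Or.imp (fun g b => h _ (g b)) (fun g b => h _ (g b))
  | mp _ _ ih1 ih2 => exact fun w => (nsem_imp _ _ w).1 (ih1 w) (ih2 w)
  | nec _ ih => exact fun _ => ih

/-- `KB` is incomplete for all thresholds with respect to epistemic probability models:
some formula is valid under the probability semantics for every threshold
`c ∈ (0,1) ∩ ℚ` yet is not `KB`-derivable. -/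
theorem KB_probability_incompleteness :
    ∃ φ : Form ℕ,
      (∀ c : ℚ, 0 < c → c < 1 →
        ∀ (W : Type) (M : EPM W ℕ) (w : W), w ∈ psem (c : ℝ) M φ) ∧
      ¬ KB φ := by
  refine ⟨Form.imp (Form.and (Form.B (Form.atom 0)) (Form.B (Form.neg (Form.atom 0))))
    (Form.or (Form.B (Form.atom 1)) (Form.B (Form.neg (Form.atom 1)))), ?_, ?_⟩
  · intro c _ _ W M w
    have h0 := M.Pw_compl w (psem (c : ℝ) M (Form.atom 0))
    have h1 := M.Pw_compl w (psem (c : ℝ) M (Form.atom 1))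
    by_contra hcon
    change ¬ ¬ (((c : ℝ) < M.Pw w (psem (c : ℝ) M (Form.atom 0)) ∧
      (c : ℝ) < M.Pw w (psem (c : ℝ) M (Form.atom 0))ᶜ) ∧
      ¬ ¬ (¬ ((c : ℝ) < M.Pw w (psem (c : ℝ) M (Form.atom 1))) ∧
      ¬ ((c : ℝ) < M.Pw w (psem (c : ℝ) M (Form.atom 1))ᶜ))) at hcon
    rw [not_not, not_not] at hcon
    obtain ⟨⟨a1, a2⟩, a3, a4⟩ := hcon
    linarith
  · intro h
    have := KB_nsem h (true, true)
    simp [Form.imp, Form.or, nsem] at this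
end
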